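/- arXiv:2507.19139 — 4 statements merged into one kernel-verified Lean document; each statement's English description precedes it below -/
import Mathlib

section
/- For any two matching strings s1 and s2 of length n over an alphabet Σ, there is exactly one valid swap permutation transforming s1 into s2; consequently the swap permutation π(s1,s2) and the swap string h_{s1,s2} are well-defined (unique). -/
/-!
Strings of length `n` over an alphabet `α` are modelled as functions `ℕ → α`,
where only the values at positions `0, …, n-1` (0-indexed) are relevant.
A swap at (0-indexed) position `p` exchanges the letters at positions `p` and `p+1`.
A swap permutation is modelled as a `Finset ℕ` of swap positions, pairwise at
distance ≥ 2 (equivalently: containing no two consecutive positions).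
-/

universe u

variable {α : Type u}

/-- `P` is a swap permutation for strings of length `n`: every swap position is in range
and no two swaps overlap (positions are pairwise at distance ≥ 2). -/
def IsSwapSet (n : ℕ) (P : Finset ℕ) : Prop :=
  (∀ p ∈ P, p + 1 < n) ∧ (∀ p ∈ P, p + 1 ∉ P)

/-- Apply a set of pairwise disjoint swaps to a string. -/
def applySwaps (P : Finset ℕ) (s : ℕ → α) : ℕ → α := fun i =>
  if i ∈ P then s (i + 1)
  else if 0 < i ∧ i - 1 ∈ P then s (i - 1)
  else s i

/-- The swap permutation `P` transforms `s1` into `s2` (as length-`n` strings). -/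
def Transforms (n : ℕ) (P : Finset ℕ) (s1 s2 : ℕ → α) : Prop :=
  IsSwapSet n P ∧ ∀ i < n, applySwaps P s1 i = s2 i

/-- Two length-`n` strings are matching if some swap permutation transforms one
into the other. -/
def SwMatching (n : ℕ) (s1 s2 : ℕ → α) : Prop :=
  ∃ P : Finset ℕ, Transforms n P s1 s2

/-- `P` is a *valid* swap permutation transforming `s1` into `s2`:
it transforms `s1` into `s2` and never swaps two identical letters. -/
def ValidTransform (n : ℕ) (P : Finset ℕ) (s1 s2 : ℕ → α) : Prop :=
  Transforms n P s1 s2 ∧ ∀ p ∈ P, s1 p ≠ s1 (p + 1)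

/-- Hamming distance of two length-`n` strings. -/
noncomputable def hamDist {β : Type*} (n : ℕ) (s t : ℕ → β) : ℕ :=
  letI : DecidablePred (fun i => s i ≠ t i) := fun _ => Classical.propDecidable _
  ((Finset.range n).filter (fun i => s i ≠ t i)).card

/-- Swap distance: the number of swaps of the valid swap permutation transforming
`s1` into `s2` (unique when it exists), and `⊤` if the strings are not matching. -/
noncomputable def swapDist (n : ℕ) (s1 s2 : ℕ → α) : ℕ∞ :=
  sInf {m : ℕ∞ | ∃ P : Finset ℕ, ValidTransform n P s1 s2 ∧ m = (P.card : ℕ∞)}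

/-- Swap+Hamming distance: minimum over all length-`n` strings `t` of
`∂S(s1,t) + ∂Ham(t,s2)`. -/
noncomputable def shDist (n : ℕ) (s1 s2 : ℕ → α) : ℕ∞ :=
  ⨅ t : ℕ → α, swapDist n s1 t + (hamDist n t s2 : ℕ∞)

/-- Number of occurrences of the letter `x` at positions `a ≤ i < b` of the string `s`. -/
noncomputable def countIn {β : Type*} (s : ℕ → β) (a b : ℕ) (x : β) : ℕ :=
  letI : DecidablePred (fun i => s i = x) := fun _ => Classical.propDecidable _
  ((Finset.Ico a b).filter (fun i => s i = x)).card

/-- Greedy (left-to-right) swap set between two strings: position `p` is greedily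
swapped iff `s1[p] = s2[p+1]`, `s1[p+1] = s2[p]`, `s1[p] ≠ s1[p+1]`, and position
`p-1` was not swapped. -/
def greedyMem (s1 s2 : ℕ → α) : ℕ → Prop
  | 0 => s1 0 = s2 1 ∧ s1 1 = s2 0 ∧ s1 0 ≠ s1 1
  | p + 1 => (s1 (p + 1) = s2 (p + 2) ∧ s1 (p + 2) = s2 (p + 1) ∧ s1 (p + 1) ≠ s1 (p + 2))
      ∧ ¬ greedyMem s1 s2 p

/-- The greedy swap set `G(s1,s2)` restricted to the valid positions `0, …, n-2`. -/
noncomputable def greedySet (n : ℕ) (s1 s2 : ℕ → α) : Finset ℕ :=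
  letI : DecidablePred (greedyMem s1 s2) := fun _ => Classical.propDecidable _
  (Finset.range (n - 1)).filter (greedyMem s1 s2)

/-- `SW(S, t, i)`: the set of indices `j` such that `t` and `s j` have a greedy swap
at position `i`. -/
noncomputable def SW (n : ℕ) {k : ℕ} (s : Fin k → ℕ → α) (t : ℕ → α) (i : ℕ) :
    Finset (Fin k) :=
  letI : DecidablePred (fun j : Fin k => i ∈ greedySet n t (s j)) :=
    fun _ => Classical.propDecidable _
  Finset.univ.filter (fun j => i ∈ greedySet n t (s j))

/-- The swap `(p, p+1)` is necessary for the input string `s i` if every string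
matching all strings of `S` has a swap at position `p` in its valid swap
permutation towards `s i`. -/
def NecessarySwap (n : ℕ) {k : ℕ} (s : Fin k → ℕ → α) (i : Fin k) (p : ℕ) : Prop :=
  ∀ t : ℕ → α, (∀ j, SwMatching n t (s j)) →
    ∀ P : Finset ℕ, ValidTransform n P t (s i) → p ∈ P

/-- Lexicographic strict order on length-`n` strings. -/
def LexLt {β : Type*} [LinearOrder β] (n : ℕ) (s t : ℕ → β) : Prop :=
  ∃ i < n, s i < t i ∧ ∀ j < i, s j = t j

section ApplySwaps

variable {P Q : Finset ℕ} {s : ℕ → α}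

theorem applySwaps_of_mem {p : ℕ} (hp : p ∈ P) : applySwaps P s p = s (p + 1) :=
  if_pos hp

theorem applySwaps_succ_of_mem {p : ℕ} (hp : p ∈ P) (hp' : p + 1 ∉ P) :
    applySwaps P s (p + 1) = s p := by
  simp [applySwaps, hp, hp']

theorem applySwaps_of_notMem {i : ℕ} (hi : i ∉ P) (hpred : ∀ p ∈ P, p + 1 ≠ i) :
    applySwaps P s i = s i := by
  have hpred' : ¬(0 < i ∧ i - 1 ∈ P) := fun ⟨hpos, hmem⟩ =>
    hpred _ hmem (Nat.sub_add_cancel hpos)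
  simp [applySwaps, hi, hpred']

theorem applySwaps_eq_of_subset (hQP : Q ⊆ P) (hdisj : ∀ p ∈ P, p + 1 ∉ P)
    (heq : ∀ p ∈ P, p ∉ Q → s p = s (p + 1)) : applySwaps Q s = applySwaps P s := by
  funext i
  by_cases hiP : i ∈ P
  · rw [applySwaps_of_mem hiP]
    by_cases hiQ : i ∈ Q
    · exact applySwaps_of_mem hiQ
    · have hpred : ∀ p ∈ Q, p + 1 ≠ i := by
        rintro p hp rfl
        exact hdisj p (hQP hp) hiP
      rw [applySwaps_of_notMem hiQ hpred, heq i hiP hiQ]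
  have hiQ : i ∉ Q := fun hi => hiP (hQP hi)
  by_cases hpred : ∃ p ∈ P, p + 1 = i
  · obtain ⟨p, hpP, rfl⟩ := hpred
    rw [applySwaps_succ_of_mem hpP hiP]
    by_cases hpQ : p ∈ Q
    · exact applySwaps_succ_of_mem hpQ hiQ
    · have hpredQ : ∀ q ∈ Q, q + 1 ≠ p + 1 := by
        rintro q hq hqp
        exact hpQ (Nat.succ_injective hqp ▸ hq)
      rw [applySwaps_of_notMem hiQ hpredQ, heq p hpP hpQ]
  · push Not at hpred
    rw [applySwaps_of_notMem hiP hpred, applySwaps_of_notMem hiQ fun p hp => hpred p (hQP hp)]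

end ApplySwaps

section ValidTransform

variable {n : ℕ} {P Q : Finset ℕ} {s1 s2 : ℕ → α}

theorem IsSwapSet.subset (hP : IsSwapSet n P) (hQP : Q ⊆ P) : IsSwapSet n Q :=
  ⟨fun p hp => hP.1 p (hQP hp), fun p hp hp' => hP.2 p (hQP hp) (hQP hp')⟩

theorem Transforms.subset (hP : Transforms n P s1 s2) (hQP : Q ⊆ P)
    (heq : ∀ p ∈ P, p ∉ Q → s1 p = s1 (p + 1)) : Transforms n Q s1 s2 := by
  refine ⟨hP.1.subset hQP, ?_⟩
  rw [applySwaps_eq_of_subset hQP hP.1.2 heq]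
  exact hP.2

theorem Transforms.validTransform_filter [DecidablePred fun p => s1 p ≠ s1 (p + 1)]
    (hP : Transforms n P s1 s2) :
    ValidTransform n (P.filter fun p => s1 p ≠ s1 (p + 1)) s1 s2 := by
  refine ⟨hP.subset (Finset.filter_subset _ P) fun p hp hpQ => ?_,
    fun p hp => (Finset.mem_filter.1 hp).2⟩
  by_contra hne
  exact hpQ (Finset.mem_filter.2 ⟨hp, hne⟩)

/-- Without a swap at `p - 1` or `p`, the string transformed by `Q` keeps the letter `s1 p`,
whereas a valid swap at `p` changes it. -/
theorem ValidTransform.mem_of_mem (hP : ValidTransform n P s1 s2) (hQ : Transforms n Q s1 s2)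
    {p : ℕ} (hpred : ∀ q ∈ Q, q + 1 = p → q ∈ P) (hp : p ∈ P) : p ∈ Q := by
  obtain ⟨⟨⟨hlt, hdisj⟩, heqP⟩, hne⟩ := hP
  have hpn : p < n := (Nat.lt_succ_self p).trans (hlt p hp)
  have hpredQ : ∀ q ∈ Q, q + 1 ≠ p := by
    rintro q hq rfl
    exact hdisj q (hpred q hq rfl) hp
  by_contra hpQ
  apply hne p hp
  calc
    s1 p = applySwaps Q s1 p := (applySwaps_of_notMem hpQ hpredQ).symm
    _ = s2 p := hQ.2 p hpn
    _ = applySwaps P s1 p := (heqP p hpn).symm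
    _ = s1 (p + 1) := applySwaps_of_mem hp

theorem ValidTransform.unique (hP : ValidTransform n P s1 s2) (hQ : ValidTransform n Q s1 s2) :
    P = Q := by
  ext p
  induction p using Nat.strong_induction_on with
  | _ p ih =>
    exact ⟨hP.mem_of_mem hQ.1 fun q hqQ hqp => (ih q (by lia)).2 hqQ,
      hQ.mem_of_mem hP.1 fun q hqP hqp => (ih q (by lia)).1 hqP⟩

end ValidTransform

/-- For any two matching strings `s1`, `s2` of length `n`, there is
exactly one valid swap permutation transforming `s1` into `s2`; hence `π(s1,s2)`
(and thus the swap string `h_{s1,s2}`) is well-defined. -/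
theorem swap_permutation_unique {α : Type u} (n : ℕ) (s1 s2 : ℕ → α)
    (h : SwMatching n s1 s2) :
    ∃! P : Finset ℕ, ValidTransform n P s1 s2 := by
  classical
  obtain ⟨P, hP⟩ := h
  exact ⟨_, hP.validTransform_filter, fun Q hQ => hQ.unique hP.validTransform_filter⟩
end

section
/- Let s1, s2, s3 be strings of length n over Σ such that s1 and s2 are matching and s2 and s3 are matching, and let h = h_{s1,s2} ⊕ h_{s2,s3} be the position-wise XOR of the two swap strings. If there is no position p with h[p] = h[p+1] = 1, then s1 and s3 are matching and h_{s1,s3} = h. -/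
/-!
Strings of length `n` over an alphabet `α` are modelled as functions `ℕ → α`,
where only the values at positions `0, …, n-1` (0-indexed) are relevant.
A swap at (0-indexed) position `p` exchanges the letters at positions `p` and `p+1`.
A swap permutation is modelled as a `Finset ℕ` of swap positions, pairwise at
distance ≥ 2 (equivalently: containing no two consecutive positions).
-/

universe u

variable {α : Type u}

/-!
If no two positions of `U = P ∪ Q` are consecutive, the pairs `{p, p + 1}` with `p ∈ U` are
disjoint, and each of the two swap permutations either exchanges or fixes such a pair. On a pair,
exchanging twice is the identity, so the composite exchanges exactly the pairs indexed by `P ∆ Q`;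
and since the two letters of a pair stay within it, they are distinct in `s1` if and only if they
are distinct in `s2`, which gives validity. It is enough to forbid consecutive positions in `P ∆ Q`:
if `p ∈ P` and `p + 1 ∈ Q`, then `p ∉ Q` and `p + 1 ∉ P`, so both positions lie in `P ∆ Q`.
-/

section

open scoped symmDiff

/-- Pairwise disjointness of the swaps at the positions in `P`: the part of `IsSwapSet` that does
not refer to the length of the strings. -/
def NoConsecutive (P : Finset ℕ) : Prop :=
  ∀ p ∈ P, p + 1 ∉ P

/-- The map on positions underlying a swap permutation, so that `applySwaps P s` is
`s ∘ swapIndex P`. It makes sense for every `P`, but is a permutation only if no two positions of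
`P` are consecutive. -/
def swapIndex (P : Finset ℕ) (i : ℕ) : ℕ :=
  if i ∈ P then i + 1 else if 0 < i ∧ i - 1 ∈ P then i - 1 else i

variable {n i p : ℕ} {P Q R U : Finset ℕ} {s t s1 s2 s3 : ℕ → α}

theorem NoConsecutive.union_of_symmDiff (hP : NoConsecutive P) (hQ : NoConsecutive Q)
    (hPQ : NoConsecutive (P ∆ Q)) : NoConsecutive (P ∪ Q) := by
  have mem_symmDiff_of_succ_mem : ∀ p ∈ P ∪ Q, p + 1 ∈ P ∪ Q → p ∈ P ∆ Q ∧ p + 1 ∈ P ∆ Q := by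
    intro p hp hp'
    have := hP p
    have := hQ p
    simp only [Finset.mem_union, Finset.mem_symmDiff] at *
    tauto
  intro p hp hp'
  obtain ⟨h, h'⟩ := mem_symmDiff_of_succ_mem p hp hp'
  exact hPQ p h h'

theorem swapIndex_of_notMem (hi : i ∉ P) (hpred : ∀ p ∈ P, p + 1 ≠ i) : swapIndex P i = i := by
  have : ¬(0 < i ∧ i - 1 ∈ P) := fun h => hpred _ h.2 (Nat.sub_add_cancel h.1)
  simp only [swapIndex, hi, this, if_false]

theorem swapIndex_of_subset (hU : NoConsecutive U) (hPU : P ⊆ U) (hp : p ∈ U) :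
    swapIndex P p = if p ∈ P then p + 1 else p := by
  split_ifs with hpP
  · exact if_pos hpP
  · refine swapIndex_of_notMem hpP ?_
    rintro q hq rfl
    exact hU q (hPU hq) hp

theorem swapIndex_succ_of_subset (hU : NoConsecutive U) (hPU : P ⊆ U) (hp : p ∈ U) :
    swapIndex P (p + 1) = if p ∈ P then p else p + 1 := by
  have : p + 1 ∉ P := fun h => hU p hp (hPU h)
  simp [swapIndex, this]

theorem swapIndex_lt (hP : ∀ p ∈ P, p + 1 < n) (hi : i < n) : swapIndex P i < n := by
  unfold swapIndex
  split_ifs with h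
  · exact hP i h
  all_goals omega

theorem swapIndex_swapIndex (hPQ : NoConsecutive (P ∪ Q)) (i : ℕ) :
    swapIndex P (swapIndex Q i) = swapIndex (P ∆ Q) i := by
  have hP : P ⊆ P ∪ Q := Finset.subset_union_left
  have hQ : Q ⊆ P ∪ Q := Finset.subset_union_right
  have hD : P ∆ Q ⊆ P ∪ Q := symmDiff_le_sup
  by_cases hleft : i ∈ P ∪ Q
  · have eqP := swapIndex_of_subset hPQ hP hleft
    have eqP' := swapIndex_succ_of_subset hPQ hP hleft
    rw [swapIndex_of_subset hPQ hQ hleft, swapIndex_of_subset hPQ hD hleft]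
    by_cases i ∈ P <;> by_cases i ∈ Q <;> simp_all [Finset.mem_symmDiff]
  by_cases hright : ∃ p ∈ P ∪ Q, p + 1 = i
  · obtain ⟨p, hp, rfl⟩ := hright
    have eqP := swapIndex_of_subset hPQ hP hp
    have eqP' := swapIndex_succ_of_subset hPQ hP hp
    rw [swapIndex_succ_of_subset hPQ hQ hp, swapIndex_succ_of_subset hPQ hD hp]
    by_cases p ∈ P <;> by_cases p ∈ Q <;> simp_all [Finset.mem_symmDiff]
  · have fixed : ∀ R ⊆ P ∪ Q, swapIndex R i = i := fun R hR =>
      swapIndex_of_notMem (fun h => hleft (hR h)) fun p hp h => hright ⟨p, hR hp, h⟩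
    rw [fixed Q hQ, fixed P hP, fixed _ hD]

theorem applySwaps_apply (P : Finset ℕ) (s : ℕ → α) (i : ℕ) :
    applySwaps P s i = s (swapIndex P i) := by
  unfold applySwaps swapIndex
  split_ifs <;> rfl

theorem applySwaps_applySwaps (hPQ : NoConsecutive (P ∪ Q)) (s : ℕ → α) :
    applySwaps Q (applySwaps P s) = applySwaps (P ∆ Q) s := by
  ext i
  simp only [applySwaps_apply, swapIndex_swapIndex hPQ]

theorem applySwaps_congr (hP : ∀ p ∈ P, p + 1 < n) (hst : ∀ i < n, s i = t i) (hi : i < n) :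
    applySwaps P s i = applySwaps P t i := by
  simpa only [applySwaps_apply] using hst _ (swapIndex_lt hP hi)

theorem applySwaps_eq_succ_iff (hU : NoConsecutive U) (hPU : P ⊆ U) (hp : p ∈ U) :
    applySwaps P s p = applySwaps P s (p + 1) ↔ s p = s (p + 1) := by
  rw [applySwaps_apply, applySwaps_apply, swapIndex_of_subset hU hPU hp,
    swapIndex_succ_of_subset hU hPU hp]
  split_ifs
  · exact eq_comm
  · exact Iff.rfl

theorem IsSwapSet.symmDiff (hP : IsSwapSet n P) (hQ : IsSwapSet n Q)
    (hPQ : NoConsecutive (P ∆ Q)) : IsSwapSet n (P ∆ Q) := by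
  refine ⟨fun p hp => ?_, hPQ⟩
  rcases Finset.mem_symmDiff.1 hp with ⟨hpP, -⟩ | ⟨hpQ, -⟩
  · exact hP.1 p hpP
  · exact hQ.1 p hpQ

theorem Transforms.symmDiff (hP : Transforms n P s1 s2) (hQ : Transforms n Q s2 s3)
    (hPQ : NoConsecutive (P ∆ Q)) : Transforms n (P ∆ Q) s1 s3 := by
  have hU : NoConsecutive (P ∪ Q) := .union_of_symmDiff hP.1.2 hQ.1.2 hPQ
  refine ⟨hP.1.symmDiff hQ.1 hPQ, fun i hi => ?_⟩
  calc applySwaps (P ∆ Q) s1 i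
      = applySwaps Q (applySwaps P s1) i := by rw [applySwaps_applySwaps hU]
    _ = applySwaps Q s2 i := applySwaps_congr hQ.1.1 hP.2 hi
    _ = s3 i := hQ.2 i hi

theorem ValidTransform.symmDiff (hP : ValidTransform n P s1 s2) (hQ : ValidTransform n Q s2 s3)
    (hPQ : NoConsecutive (P ∆ Q)) : ValidTransform n (P ∆ Q) s1 s3 := by
  obtain ⟨hP, validP⟩ := hP
  obtain ⟨hQ, validQ⟩ := hQ
  have hU : NoConsecutive (P ∪ Q) := .union_of_symmDiff hP.1.2 hQ.1.2 hPQ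
  refine ⟨hP.symmDiff hQ hPQ, fun p hp => ?_⟩
  rcases Finset.mem_symmDiff.1 hp with ⟨hpP, -⟩ | ⟨hpQ, -⟩
  · exact validP p hpP
  · have hlt : p + 1 < n := hQ.1.1 p hpQ
    have hne : s2 p ≠ s2 (p + 1) := validQ p hpQ
    rw [← hP.2 p (Nat.lt_of_succ_lt hlt), ← hP.2 (p + 1) hlt] at hne
    exact mt (applySwaps_eq_succ_iff hU Finset.subset_union_left
      (Finset.mem_union_right P hpQ)).2 hne

end

/-- Let `s1,s2` be matching via the valid swap permutation `P` and
`s2,s3` matching via the valid swap permutation `Q`, and let `h = h_{s1,s2} ⊕ h_{s2,s3}`,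
i.e. the indicator string of the symmetric difference `(P \ Q) ∪ (Q \ P)`. If `h` has no
two consecutive `1`s, then `s1` and `s3` are matching and `h_{s1,s3} = h`, i.e. the
symmetric difference is the valid swap permutation transforming `s1` into `s3`. -/
theorem three_way_match_compatible {α : Type u} (n : ℕ) (s1 s2 s3 : ℕ → α)
    (P Q : Finset ℕ)
    (hP : ValidTransform n P s1 s2) (hQ : ValidTransform n Q s2 s3)
    (hno : ∀ p : ℕ, ¬ (p ∈ (P \ Q) ∪ (Q \ P) ∧ p + 1 ∈ (P \ Q) ∪ (Q \ P))) :
    SwMatching n s1 s3 ∧ ValidTransform n ((P \ Q) ∪ (Q \ P)) s1 s3 := by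
  have hvalid : ValidTransform n (symmDiff P Q) s1 s3 :=
    hP.symmDiff hQ fun p hp hp' => hno p ⟨hp, hp'⟩
  exact ⟨⟨_, hvalid.1⟩, hvalid⟩
end

section
/- Let s1, s2, s3 be strings of length n over Σ such that s1 and s2 are matching and s2 and s3 are matching, and let h = h_{s1,s2} ⊕ h_{s2,s3} be the position-wise XOR of the two swap strings. If h[p−1] = h[p] = 1 for some position p, then s1 and s3 are not matching, and every string t of length n that is matching with both s1 and s3 satisfies t[p−1] = s2[p−1], t[p] = s2[p], and t[p+1] = s2[p+1]. -/
/-!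
Strings of length `n` over an alphabet `α` are modelled as functions `ℕ → α`,
where only the values at positions `0, …, n-1` (0-indexed) are relevant.
A swap at (0-indexed) position `p` exchanges the letters at positions `p` and `p+1`.
A swap permutation is modelled as a `Finset ℕ` of swap positions, pairwise at
distance ≥ 2 (equivalently: containing no two consecutive positions).
-/

universe u

variable {α : Type u}

/-!
Only a swap at `k` moves letters across the cut between `k` and `k + 1`, so two matching strings can
differ in the multiset of their first `k + 1` letters only for a swapped `k`, hence not for two
consecutive `k`. Say `s1` arises from `s2 = … a b c …` by swapping `a ≠ b` at `p`, and `s3` by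
swapping `b ≠ c` at `p + 1`. With `M` the content of `s2` before `p`, the prefixes of length `p + 1`
and `p + 2` have contents `M + b`, `M + a + b` in `s1` and `M + a`, `M + a + c` in `s3`. They differ
at both cuts, so `s1` and `s3` do not match. If a common match `t` did not swap `p` on the way to
`s1`, or did not swap `p + 1` on the way to `s3`, then its prefix contents would be `M + b` and
`M + a + c`, but the former is not contained in the latter. So `t` makes both swaps, which determine
its three letters.
-/

/-- The multiset of the first `k` letters of a string, used to detect which swaps a transformation
between two strings has to make. -/
def prefixContent (s : ℕ → α) (k : ℕ) : Multiset α :=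
  (Multiset.range k).map s

lemma prefixContent_succ (s : ℕ → α) (k : ℕ) :
    prefixContent s (k + 1) = s k ::ₘ prefixContent s k := by
  rw [prefixContent, Multiset.range_succ, Multiset.map_cons, prefixContent]

lemma IsSwapSet.succ_ne_of_mem {n k : ℕ} {P : Finset ℕ} (hP : IsSwapSet n P) (hk : k ∈ P) :
    ∀ j ∈ P, j + 1 ≠ k := by
  rintro j hj rfl
  exact hP.2 j hj hk

lemma applySwaps_eq_self {k : ℕ} {P : Finset ℕ} (s : ℕ → α) (hk : k ∉ P)
    (hsucc : ∀ j ∈ P, j + 1 ≠ k) : applySwaps P s k = s k := by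
  rw [applySwaps, if_neg hk, if_neg]
  rintro ⟨hpos, hpred⟩
  exact hsucc (k - 1) hpred (Nat.sub_add_cancel hpos)

namespace Transforms

variable {n k : ℕ} {P : Finset ℕ} {s t : ℕ → α}

lemma apply_of_mem (h : Transforms n P s t) (hk : k ∈ P) : t k = s (k + 1) := by
  rw [← h.2 k (Nat.lt_of_succ_lt (h.1.1 k hk)), applySwaps, if_pos hk]

lemma apply_succ_of_mem (h : Transforms n P s t) (hk : k ∈ P) : t (k + 1) = s k := by
  rw [← h.2 (k + 1) (h.1.1 k hk), applySwaps, if_neg (h.1.2 k hk),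
    if_pos ⟨k.succ_pos, hk⟩, Nat.add_sub_cancel]

lemma apply_of_notMem (h : Transforms n P s t) (hkn : k < n) (hk : k ∉ P)
    (hsucc : ∀ j ∈ P, j + 1 ≠ k) : t k = s k := by
  rw [← h.2 k hkn, applySwaps_eq_self s hk hsucc]

lemma symm (h : Transforms n P s t) : Transforms n P t s := by
  refine ⟨h.1, fun i hi => ?_⟩
  by_cases hmem : i ∈ P
  · rw [applySwaps, if_pos hmem, h.apply_succ_of_mem hmem]
  by_cases hsucc : ∃ j ∈ P, j + 1 = i
  · obtain ⟨j, hj, rfl⟩ := hsucc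
    rw [applySwaps, if_neg hmem, if_pos ⟨j.succ_pos, hj⟩, Nat.add_sub_cancel, h.apply_of_mem hj]
  · push Not at hsucc
    rw [applySwaps_eq_self t hmem hsucc, h.apply_of_notMem hi hmem hsucc]

lemma prefixContent_eq (h : Transforms n P s t) (hkn : k ≤ n) (hcut : ∀ j ∈ P, j + 1 ≠ k) :
    prefixContent t k = prefixContent s k := by
  induction k using Nat.strong_induction_on with
  | h k ih =>
    obtain _ | k := k
    · rfl
    by_cases hsucc : ∃ j ∈ P, j + 1 = k
    · obtain ⟨j, hj, rfl⟩ := hsucc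
      have ih_j := ih j (by omega) (by omega) (h.1.succ_ne_of_mem hj)
      simp only [prefixContent_succ, h.apply_of_mem hj, h.apply_succ_of_mem hj, ih_j]
      exact Multiset.cons_swap ..
    · push Not at hsucc
      have ht : t k = s k := h.apply_of_notMem hkn (fun hk => hcut k hk rfl) hsucc
      rw [prefixContent_succ, prefixContent_succ, ht,
        ih k k.lt_succ_self (Nat.le_of_succ_le hkn) hsucc]

lemma prefixContent_succ_of_notMem (h : Transforms n P s t) (hkn : k < n) (hk : k ∉ P) :
    prefixContent t (k + 1) = prefixContent s (k + 1) :=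
  h.prefixContent_eq hkn fun _ hj hjk => hk (Nat.succ_injective hjk ▸ hj)

lemma prefixContent_succ_of_mem (h : Transforms n P s t) (hk : k ∈ P) :
    prefixContent t (k + 1) = s (k + 1) ::ₘ prefixContent s k := by
  have hkn : k ≤ n := (Nat.lt_of_succ_lt (h.1.1 k hk)).le
  rw [prefixContent_succ, h.apply_of_mem hk, h.prefixContent_eq hkn (h.1.succ_ne_of_mem hk)]

end Transforms

namespace ValidTransform

variable {n k : ℕ} {P : Finset ℕ} {s t : ℕ → α}

lemma symm (h : ValidTransform n P s t) : ValidTransform n P t s := by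
  refine ⟨h.1.symm, fun k hk => ?_⟩
  rw [h.1.apply_of_mem hk, h.1.apply_succ_of_mem hk]
  exact (h.2 k hk).symm

lemma prefixContent_succ_ne_of_mem (h : ValidTransform n P s t) (hk : k ∈ P) :
    prefixContent t (k + 1) ≠ prefixContent s (k + 1) := by
  rw [h.1.prefixContent_succ_of_mem hk, prefixContent_succ, Ne, Multiset.cons_inj_left]
  exact (h.2 k hk).symm

end ValidTransform

namespace SwMatching

variable {n k : ℕ} {s t : ℕ → α}

lemma symm (h : SwMatching n s t) : SwMatching n t s :=
  h.imp fun _ => Transforms.symm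

lemma prefixContent_eq_or (h : SwMatching n s t) (hkn : k + 1 < n) :
    prefixContent t (k + 1) = prefixContent s (k + 1) ∨
      prefixContent t (k + 2) = prefixContent s (k + 2) := by
  obtain ⟨P, hP⟩ := h
  by_cases hk : k ∈ P
  · exact .inr (hP.prefixContent_succ_of_notMem hkn (hP.1.2 k hk))
  · exact .inl (hP.prefixContent_succ_of_notMem (Nat.lt_of_succ_lt hkn) hk)

end SwMatching

section AdjacentSwaps

variable {n p : ℕ} {P Q R S : Finset ℕ} {s u v t : ℕ → α}

lemma prefixContent_ne_of_adjacent_swaps (hu : ValidTransform n P s u)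
    (hv : ValidTransform n Q s v) (hpP : p ∈ P) (hpQ : p + 1 ∈ Q) :
    prefixContent u (p + 1) ≠ prefixContent v (p + 1) ∧
      prefixContent u (p + 2) ≠ prefixContent v (p + 2) := by
  have hpn : p + 1 < n := hu.1.1.1 p hpP
  have hp_notMem : p ∉ Q := fun hp => hv.1.1.2 p hp hpQ
  have hv_eq := hv.1.prefixContent_succ_of_notMem (Nat.lt_of_succ_lt hpn) hp_notMem
  have hu_eq := hu.1.prefixContent_succ_of_notMem hpn (hu.1.1.2 p hpP)
  exact ⟨fun h => hu.prefixContent_succ_ne_of_mem hpP (h.trans hv_eq),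
    fun h => hv.prefixContent_succ_ne_of_mem hpQ (h.symm.trans hu_eq)⟩

lemma not_swMatching_of_adjacent_swaps (hu : ValidTransform n P s u)
    (hv : ValidTransform n Q s v) (hpP : p ∈ P) (hpQ : p + 1 ∈ Q) : ¬ SwMatching n u v := by
  obtain ⟨hne, hne'⟩ := prefixContent_ne_of_adjacent_swaps hu hv hpP hpQ
  intro huv
  exact (huv.prefixContent_eq_or (hu.1.1.1 p hpP)).elim hne.symm hne'.symm

lemma not_prefixContent_eq_and_eq_of_adjacent_swaps (hu : ValidTransform n P s u)
    (hv : ValidTransform n Q s v) (hpP : p ∈ P) (hpQ : p + 1 ∈ Q) :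
    ¬ (prefixContent t (p + 1) = prefixContent u (p + 1) ∧
      prefixContent t (p + 2) = prefixContent v (p + 2)) := by
  rintro ⟨htu, htv⟩
  have hcontent : ({t (p + 1), s (p + 1)} : Multiset α) + prefixContent s p =
      {s (p + 2), s p} + prefixContent s p := by
    rw [prefixContent_succ, htu, hu.1.prefixContent_succ_of_mem hpP,
      hv.1.prefixContent_succ_of_mem hpQ, prefixContent_succ] at htv
    simpa only [Multiset.insert_eq_cons, Multiset.cons_add, Multiset.singleton_add] using htv
  have hmem : s (p + 1) ∈ ({s (p + 2), s p} : Multiset α) := by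
    rw [← add_right_cancel hcontent]
    simp
  rcases Multiset.mem_cons.1 hmem with hbc | hba
  · exact hv.2 (p + 1) hpQ hbc
  · exact hu.2 p hpP (Multiset.mem_singleton.1 hba).symm

lemma mem_and_succ_mem_of_adjacent_swaps (hu : ValidTransform n P s u)
    (hv : ValidTransform n Q s v) (hpP : p ∈ P) (hpQ : p + 1 ∈ Q)
    (hR : Transforms n R u t) (hS : Transforms n S v t) : p ∈ R ∧ p + 1 ∈ S := by
  have hpn : p + 1 < n := hu.1.1.1 p hpP
  obtain ⟨hne, hne'⟩ := prefixContent_ne_of_adjacent_swaps hu hv hpP hpQ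
  have hnot := not_prefixContent_eq_and_eq_of_adjacent_swaps (t := t) hu hv hpP hpQ
  constructor
  · by_contra hpR
    have htu := hR.prefixContent_succ_of_notMem (Nat.lt_of_succ_lt hpn) hpR
    rcases SwMatching.prefixContent_eq_or ⟨S, hS⟩ hpn with htv | htv
    · exact hne (htu.symm.trans htv)
    · exact hnot ⟨htu, htv⟩
  · by_contra hpS
    have htv := hS.prefixContent_succ_of_notMem hpn hpS
    rcases SwMatching.prefixContent_eq_or ⟨R, hR⟩ hpn with htu | htu
    · exact hnot ⟨htu, htv⟩
    · exact hne' (htu.symm.trans htv)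

lemma eq_of_swMatching_of_adjacent_swaps (hu : ValidTransform n P s u)
    (hv : ValidTransform n Q s v) (hpP : p ∈ P) (hpQ : p + 1 ∈ Q)
    (htu : SwMatching n t u) (htv : SwMatching n t v) :
    t p = s p ∧ t (p + 1) = s (p + 1) ∧ t (p + 2) = s (p + 2) := by
  obtain ⟨R, hR⟩ := htu.symm
  obtain ⟨S, hS⟩ := htv.symm
  obtain ⟨hpR, hpS⟩ := mem_and_succ_mem_of_adjacent_swaps hu hv hpP hpQ hR hS
  refine ⟨?_, ?_, ?_⟩
  · rw [hR.apply_of_mem hpR, hu.1.apply_succ_of_mem hpP]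
  · rw [hR.apply_succ_of_mem hpR, hu.1.apply_of_mem hpP]
  · rw [hS.apply_succ_of_mem hpS, hv.1.apply_of_mem hpQ]

end AdjacentSwaps

/-- Let `s1,s2` be matching via the valid swap permutation `P` and
`s2,s3` matching via the valid swap permutation `Q`, and let `h = h_{s1,s2} ⊕ h_{s2,s3}`,
i.e. the indicator string of `(P \ Q) ∪ (Q \ P)`. If `h` has two consecutive `1`s, at
positions `p` and `p+1` (0-indexed), then `s1` and `s3` are not matching, and every
string `t` matching both `s1` and `s3` agrees with `s2` on the three letters at
positions `p`, `p+1`, `p+2`. -/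
theorem three_way_match_incompatible {α : Type u} (n : ℕ) (s1 s2 s3 : ℕ → α)
    (P Q : Finset ℕ)
    (hP : ValidTransform n P s1 s2) (hQ : ValidTransform n Q s2 s3)
    (p : ℕ) (hp : p ∈ (P \ Q) ∪ (Q \ P)) (hp1 : p + 1 ∈ (P \ Q) ∪ (Q \ P)) :
    ¬ SwMatching n s1 s3 ∧
    (∀ t : ℕ → α, SwMatching n t s1 → SwMatching n t s3 →
      t p = s2 p ∧ t (p + 1) = s2 (p + 1) ∧ t (p + 2) = s2 (p + 2)) := by
  have hcases : (p ∈ P ∧ p + 1 ∈ Q) ∨ (p ∈ Q ∧ p + 1 ∈ P) := by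
    have hP_disj := hP.1.1.2 p
    have hQ_disj := hQ.1.1.2 p
    simp only [Finset.mem_union, Finset.mem_sdiff] at hp hp1
    tauto
  rcases hcases with ⟨hpP, hpQ⟩ | ⟨hpQ, hpP⟩
  · exact ⟨not_swMatching_of_adjacent_swaps hP.symm hQ hpP hpQ,
      fun _ => eq_of_swMatching_of_adjacent_swaps hP.symm hQ hpP hpQ⟩
  · exact ⟨fun h13 => not_swMatching_of_adjacent_swaps hQ hP.symm hpQ hpP h13.symm,
      fun _ ht1 ht3 => eq_of_swMatching_of_adjacent_swaps hQ hP.symm hpQ hpP ht3 ht1⟩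
end

section
/- Let S = {s1, …, sk} be a set of strings of length n over Σ, let d, D be nonnegative integers, and let x_1, …, x_k be integers with 0 ≤ x_j ≤ d; set x = max_j x_j. Let 0 and 1 be two letters not in Σ, and for each j define the length-2x strings a_j = (01)^{x_j}(00)^{x−x_j} and b_j = (10)^{x_j}(00)^{x−x_j}, and let S' = {s_j · a_j : 1 ≤ j ≤ k} ∪ {s_j · b_j : 1 ≤ j ≤ k} (2k strings of length n+2x over Σ ∪ {0,1}). Then there exists a string s̃ of length n+2x over Σ ∪ {0,1} with ∂Ham(u, s̃) ≤ d for every u ∈ S' and Σ_{u ∈ S'} ∂Ham(u, s̃) ≤ 2D, if and only if there exists a string s* of length n over Σ ∪ {0,1} with ∂Ham(s*, s_j) ≤ d − x_j for every j and Σ_{j=1}^{k} ∂Ham(s*, s_j) ≤ D − Σ_{j=1}^{k} x_j. -/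
/-!
Strings of length `n` over an alphabet `α` are modelled as functions `ℕ → α`,
where only the values at positions `0, …, n-1` (0-indexed) are relevant.
A swap at (0-indexed) position `p` exchanges the letters at positions `p` and `p+1`.
A swap permutation is modelled as a `Finset ℕ` of swap positions, pairwise at
distance ≥ 2 (equivalently: containing no two consecutive positions).
-/

universe u

variable {α : Type u}

/-!
The gadgets `(01)^y (00)^∞` and `(10)^y (00)^∞` have disjoint supports of size `y`, so the all-zero
string is a midpoint: it is at distance `y` from each of them, and they are at distance `2y` from
each other. Appending zeros to a consensus string thus adds `y` to both distances. Conversely, by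
the triangle inequality, the suffix of any string contributes at least `2y` to the sum of its
distances to the two extended strings; halving that sum gives both the radius and the sum bound for
the prefix.
-/

section Hamming

variable {β : Type*}

open scoped Classical in
theorem hamDist_eq_count (n : ℕ) (s t : ℕ → β) :
    hamDist n s t = n.count fun i => s i ≠ t i := by
  rw [hamDist, Nat.count_eq_card_filter_range]
  congr

open scoped Classical in
theorem hamDist_eq_hammingDist (n : ℕ) (s t : ℕ → β) :
    hamDist n s t = hammingDist (fun i : Fin n => s i) fun i => t i := by
  simp only [hamDist, hammingDist, Finset.card_filter, Finset.sum_range]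
  congr! 3

theorem hamDist_comm (n : ℕ) (s t : ℕ → β) : hamDist n s t = hamDist n t s := by
  classical
  simp only [hamDist_eq_hammingDist, hammingDist_comm]

theorem hamDist_triangle_right (n : ℕ) (s t r : ℕ → β) :
    hamDist n s t ≤ hamDist n s r + hamDist n t r := by
  classical
  simpa only [hamDist_eq_hammingDist] using hammingDist_triangle_right _ _ _

theorem hamDist_congr {n : ℕ} {s s' t t' : ℕ → β}
    (hs : ∀ i < n, s i = s' i) (ht : ∀ i < n, t i = t' i) :
    hamDist n s t = hamDist n s' t' := by
  classical
  simp only [hamDist_eq_hammingDist, hs _ (Fin.is_lt _), ht _ (Fin.is_lt _)]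

theorem hamDist_add (n m : ℕ) (s t : ℕ → β) :
    hamDist (n + m) s t =
      hamDist n s t + hamDist m (fun i => s (n + i)) (fun i => t (n + i)) := by
  classical
  simp only [hamDist_eq_count, Nat.count_add]

theorem hamDist_eq_add_of_forall_eq_or_eq {n : ℕ} {s t z : ℕ → β}
    (h : ∀ i < n, s i = z i ∨ t i = z i) :
    hamDist n s t = hamDist n s z + hamDist n t z := by
  simp only [hamDist, Finset.card_filter, ← Finset.sum_add_distrib]
  exact Finset.sum_congr rfl fun i hi => by grind

end Hamming

section Append

variable {β : Type*}

/-- The concatenation `p · q` of a string `p` of length `n` with a string `q`; the values of `p`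
beyond position `n - 1` are ignored. -/
def appendAt (n : ℕ) (p q : ℕ → β) : ℕ → β := fun i =>
  if i < n then p i else q (i - n)

theorem appendAt_of_lt {n i : ℕ} (hi : i < n) (p q : ℕ → β) : appendAt n p q i = p i :=
  if_pos hi

theorem appendAt_add (n : ℕ) (p q : ℕ → β) (i : ℕ) : appendAt n p q (n + i) = q i := by
  simp [appendAt]

theorem hamDist_appendAt_left (n m : ℕ) (p q t : ℕ → β) :
    hamDist (n + m) (appendAt n p q) t = hamDist n p t + hamDist m q fun i => t (n + i) := by
  simp only [hamDist_add, appendAt_add]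
  rw [hamDist_congr (fun _ hi => appendAt_of_lt hi p q) fun _ _ => rfl]

theorem hamDist_appendAt_appendAt (n m : ℕ) (p q t z : ℕ → β) :
    hamDist (n + m) (appendAt n p q) (appendAt n t z) = hamDist n p t + hamDist m q z := by
  simp only [hamDist_appendAt_left, appendAt_add]
  rw [hamDist_congr (fun _ _ => rfl) fun _ hi => appendAt_of_lt hi t z]

theorem two_mul_hamDist_add_le_hamDist_appendAt_add (n m : ℕ) (p a b t : ℕ → β) :
    2 * hamDist n p t + hamDist m a b ≤
      hamDist (n + m) (appendAt n p a) t + hamDist (n + m) (appendAt n p b) t := by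
  have suffix_le := hamDist_triangle_right m a b fun i => t (n + i)
  rw [hamDist_appendAt_left, hamDist_appendAt_left]
  lia

end Append

section PulseTrain

variable {β : Type*} {zero one : β}

/-- The gadget string made of `y` blocks of length `q`, each with the letter `one` at offset `r` and
`zero` elsewhere, followed by infinitely many letters `zero`. For `q = 2` it is `(01)^y (00)^∞` if
`r = 1`, and `(10)^y (00)^∞` if `r = 0`. -/
def pulseTrain (zero one : β) (q r y : ℕ) : ℕ → β := fun i =>
  if i < q * y ∧ i % q = r then one else zero

theorem pulseTrain_ne_zero_iff (h : zero ≠ one) {q r y i : ℕ} :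
    pulseTrain zero one q r y i ≠ zero ↔ i < q * y ∧ i % q = r := by
  grind [pulseTrain]

theorem pulseTrain_eq_zero_or_eq_zero {q r r' y : ℕ} (hr : r ≠ r') (i : ℕ) :
    pulseTrain zero one q r y i = zero ∨ pulseTrain zero one q r' y i = zero := by
  grind [pulseTrain]

theorem count_lt_mul_and_mod_eq {q r y m : ℕ} (hr : r < q) (hy : y ≤ m) :
    (q * m).count (fun i => i < q * y ∧ i % q = r) = y := by
  obtain ⟨k, rfl⟩ := Nat.exists_eq_add_of_le hy
  have hq : 0 < q := Nat.zero_lt_of_lt hr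
  have hmod : r % q = r := Nat.mod_eq_of_lt hr
  have after : (q * k).count (fun i => q * y + i < q * y ∧ (q * y + i) % q = r) = 0 :=
    Nat.count_iff_forall_not.2 fun i _ => by lia
  calc
    _ = (q * y).count (fun i => i < q * y ∧ i % q = r) := by
      rw [mul_add, Nat.count_add, after, add_zero]
    _ = (q * y).count (· ≡ r [MOD q]) :=
      le_antisymm (Nat.count_mono_left fun _ _ hi => hi.2.trans hmod.symm)
        (Nat.count_mono_left fun _ hi hir => ⟨hi, Eq.trans hir hmod⟩)
    _ = y := by simp [Nat.count_modEq_card _ hq, hq]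

theorem hamDist_pulseTrain_zero (h : zero ≠ one) {q r y m : ℕ} (hr : r < q) (hy : y ≤ m) :
    hamDist (q * m) (pulseTrain zero one q r y) (fun _ => zero) = y := by
  classical
  simp only [hamDist_eq_count, pulseTrain_ne_zero_iff h, count_lt_mul_and_mod_eq hr hy]

theorem hamDist_pulseTrain_pulseTrain (h : zero ≠ one) {q r r' y m : ℕ} (hr : r < q)
    (hr' : r' < q) (hne : r ≠ r') (hy : y ≤ m) :
    hamDist (q * m) (pulseTrain zero one q r y) (pulseTrain zero one q r' y) = 2 * y := by
  rw [hamDist_eq_add_of_forall_eq_or_eq fun i _ => pulseTrain_eq_zero_or_eq_zero hne i,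
    hamDist_pulseTrain_zero h hr hy, hamDist_pulseTrain_zero h hr' hy, two_mul]

end PulseTrain

theorem mixed_hamming_reduction_general {ι β : Type*} [Fintype ι] {zero one : β}
    (hne : zero ≠ one) (n m d D : ℕ) (p : ι → ℕ → β) (x : ι → ℕ) (hx : ∀ j, x j ≤ m) :
    (∃ t : ℕ → β,
      (∀ j, hamDist (n + 2 * m) (appendAt n (p j) (pulseTrain zero one 2 1 (x j))) t ≤ d ∧
        hamDist (n + 2 * m) (appendAt n (p j) (pulseTrain zero one 2 0 (x j))) t ≤ d) ∧
      (∑ j, hamDist (n + 2 * m) (appendAt n (p j) (pulseTrain zero one 2 1 (x j))) t) +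
        (∑ j, hamDist (n + 2 * m) (appendAt n (p j) (pulseTrain zero one 2 0 (x j))) t) ≤ 2 * D) ↔
    ∃ t : ℕ → β, (∀ j, hamDist n t (p j) + x j ≤ d) ∧
      (∑ j, hamDist n t (p j)) + (∑ j, x j) ≤ D := by
  simp only [hamDist_comm n _ (p _)]
  constructor
  · rintro ⟨t, radius, total⟩
    have lower (j) := two_mul_hamDist_add_le_hamDist_appendAt_add n (2 * m) (p j)
      (pulseTrain zero one 2 1 (x j)) (pulseTrain zero one 2 0 (x j)) t
    simp only [hamDist_pulseTrain_pulseTrain hne one_lt_two two_pos one_ne_zero (hx _)] at lower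
    refine ⟨t, fun j => by linarith [lower j, radius j], ?_⟩
    have sum_lower := Finset.sum_le_sum fun j (_ : j ∈ Finset.univ) => lower j
    simp only [Finset.sum_add_distrib, ← Finset.mul_sum] at sum_lower
    lia
  · rintro ⟨t, radius, total⟩
    refine ⟨appendAt n t fun _ => zero, ?_⟩
    simp only [hamDist_appendAt_appendAt, hamDist_pulseTrain_zero hne one_lt_two (hx _),
      hamDist_pulseTrain_zero hne two_pos (hx _), and_self, Finset.sum_add_distrib]
    exact ⟨radius, by lia⟩

/-- Reduction of the mixed radius+sum Hamming consensus to the plain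
one. The alphabet `Σ ∪ {0,1}` is modelled as `α ⊕ Bool` with `0 = Sum.inr false` and
`1 = Sum.inr true`; strings are 0-indexed, `X = max_j x j`, and for each `j` the gadget
strings `a j = (01)^{x j} (00)^{X - x j}` and `b j = (10)^{x j} (00)^{X - x j}` of
length `2X` are appended to `s j`. The bounds `≤ d − x j` and `≤ D − ∑ j, x j` are
stated additively (their integer reading). -/
theorem mixed_hamming_reduction {α : Type u} (n k d D : ℕ)
    (s : Fin k → ℕ → α) (x : Fin k → ℕ) (hx : ∀ j, x j ≤ d) :
    (let X : ℕ := Finset.univ.sup x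
     let a : Fin k → ℕ → α ⊕ Bool := fun j i =>
       if i < 2 * x j ∧ i % 2 = 1 then Sum.inr true else Sum.inr false
     let b : Fin k → ℕ → α ⊕ Bool := fun j i =>
       if i < 2 * x j ∧ i % 2 = 0 then Sum.inr true else Sum.inr false
     let ua : Fin k → ℕ → α ⊕ Bool := fun j i =>
       if i < n then Sum.inl (s j i) else a j (i - n)
     let ub : Fin k → ℕ → α ⊕ Bool := fun j i =>
       if i < n then Sum.inl (s j i) else b j (i - n)
     ((∃ stil : ℕ → α ⊕ Bool,
         (∀ j, hamDist (n + 2 * X) (ua j) stil ≤ d ∧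
               hamDist (n + 2 * X) (ub j) stil ≤ d) ∧
         (∑ j, hamDist (n + 2 * X) (ua j) stil) +
           (∑ j, hamDist (n + 2 * X) (ub j) stil) ≤ 2 * D) ↔
      (∃ sstar : ℕ → α ⊕ Bool,
         (∀ j, hamDist n sstar (fun i => Sum.inl (s j i)) + x j ≤ d) ∧
         (∑ j, hamDist n sstar (fun i => Sum.inl (s j i))) + (∑ j, x j) ≤ D))) :=
  mixed_hamming_reduction_general (Sum.inr_injective.ne Bool.false_ne_true) n _ d D
    (fun j i => Sum.inl (s j i)) x fun j => Finset.le_sup (Finset.mem_univ j)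
end
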